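/- Let f be an entire function of exponential type that is not identically zero, and set c := |h_f(π/2) + h_f(−π/2)|/2, where h_f is the indicator function of f. Let 0 < γ < π/2 and let Λ ⊆ {z ∈ ℂ : z ≠ 0, |arg(z)| < γ} be a set of zeros of f (that is, f(λ) = 0 for every λ ∈ Λ). Then the lower density of Λ satisfies ldens(Λ) ≤ c/(π·cos(γ)). -/

import Mathlib

open Filter Complex

/-- Support function `H_K(z) = sup { Re (z·u) : u ∈ K }` of a set `K ⊆ ℂ`. -/
noncomputable def suppFn (K : Set ℂ) (z : ℂ) : ℝ :=
  sSup ((fun u => (z * u).re) '' K)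

/-- The norm `‖f‖_{K,n} = sup_z |f z| · exp (−H_K z − |z|/n)`. -/
noncomputable def expNorm (K : Set ℂ) (n : ℕ) (f : ℂ → ℂ) : ℝ :=
  sSup (Set.range fun z : ℂ => ‖f z‖ * Real.exp (-(suppFn K z) - ‖z‖ / n))

/-- Membership in `Exp(K)`: `f` is entire and all the norms `‖f‖_{K,n}` are finite. -/
def MemExp (K : Set ℂ) (f : ℂ → ℂ) : Prop :=
  Differentiable ℂ f ∧ ∀ n : ℕ, 0 < n →
    BddAbove (Set.range fun z : ℂ => ‖f z‖ * Real.exp (-(suppFn K z) - ‖z‖ / n))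

open scoped Classical in
/-- Lower density of a set of natural numbers. -/
noncomputable def lowerDensity (A : Set ℕ) : ℝ :=
  liminf (fun N : ℕ =>
    (((Finset.range (N + 1)).filter (fun n => n ∈ A)).card : ℝ) / N) atTop

/-- Lower density of a discrete subset of `ℂ`. -/
noncomputable def ldensC (Λ : Set ℂ) : ℝ :=
  liminf (fun r : ℝ => (Nat.card {z : ℂ // z ∈ Λ ∧ ‖z‖ ≤ r} : ℝ) / r) atTop

/-- `f` is hypercyclic for the translation `T₁` on `Exp(K)`. -/
def HCExp (K : Set ℂ) (f : ℂ → ℂ) : Prop :=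
  MemExp K f ∧ ∀ g : ℂ → ℂ, MemExp K g → ∀ n : ℕ, 0 < n → ∀ ε > (0 : ℝ),
    ∃ k : ℕ, expNorm K n (fun z => f (z + (k : ℂ)) - g z) < ε

/-- `f` is frequently hypercyclic for the translation `T₁` on `Exp(K)`. -/
def FHCExp (K : Set ℂ) (f : ℂ → ℂ) : Prop :=
  MemExp K f ∧ ∀ g : ℂ → ℂ, MemExp K g → ∀ n : ℕ, 0 < n → ∀ ε > (0 : ℝ),
    0 < lowerDensity {k : ℕ | expNorm K n (fun z => f (z + (k : ℂ)) - g z) < ε}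

/-- `f` is hypercyclic (Birkhoff-universal) for `T₁` on `H(ℂ)`. -/
def HCEnt (f : ℂ → ℂ) : Prop :=
  Differentiable ℂ f ∧ ∀ g : ℂ → ℂ, Differentiable ℂ g → ∀ R > (0 : ℝ), ∀ ε > (0 : ℝ),
    ∃ k : ℕ, ∀ z : ℂ, ‖z‖ ≤ R → ‖f (z + (k : ℂ)) - g z‖ < ε

/-- `f` is frequently hypercyclic (frequently Birkhoff-universal) for `T₁` on `H(ℂ)`. -/
def FHCEnt (f : ℂ → ℂ) : Prop :=
  Differentiable ℂ f ∧ ∀ g : ℂ → ℂ, Differentiable ℂ g → ∀ R > (0 : ℝ), ∀ ε > (0 : ℝ),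
    0 < lowerDensity {k : ℕ | ∀ z : ℂ, ‖z‖ ≤ R → ‖f (z + (k : ℂ)) - g z‖ < ε}

/-- `f` is an entire function of (finite) exponential type. -/
def ExpType (f : ℂ → ℂ) : Prop :=
  Differentiable ℂ f ∧ ∃ C τ : ℝ, ∀ z : ℂ, ‖f z‖ ≤ C * Real.exp (τ * ‖z‖)

/-- The indicator function `h_f(θ) = limsup_{r→∞} log |f(r e^{iθ})| / r`. -/
noncomputable def indicatorFn (f : ℂ → ℂ) (θ : ℝ) : ℝ :=
  limsup (fun r : ℝ => Real.log ‖f ((r : ℂ) * Complex.exp (θ * Complex.I))‖ / r) atTop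

/-!
Let `s` be slightly larger than `(h_f(π/2) + h_f(-π/2)) / 2` and fix a small `x > 0` with
`f x ≠ 0`. If `Λ` has lower density at least `δ`, select zeros `l₀, l₁, …` in `Λ` with
`|l_k| ≤ k / δ + O(1)`. Replacing the factors `z - l` of `f` by `z + conj l`, for the selected
zeros with index below `δ R`, costs at most a factor `exp (O(Re z))` on the boundary of the right
half of the disc of radius `2 R`, but multiplies `|f x|` by at least
`exp (∑ 2 x Re l / (x² + |l|²))`. Up to a factor `exp (d Im z)`, Phragmén–Lindelöf bounds `|f|` by
`exp (s |Im z| + O(Re z))`, and `exp ((2 s / π) z log (2 R / z))` has modulus `exp (s |Im z|)` on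
the imaginary axis, so the maximum principle yields
`∑ Re l / (x² + |l|²) ≤ (s / π) log R + O(1)`. In the sector the left-hand side is at least
`δ cos γ log R - O(1)`; hence `δ cos γ ≤ s / π`.
-/

open scoped ComplexConjugate

/-- Functions of exponential type in the closed right half-plane: the analogue of `ExpType` for
functions holomorphic in `Re z > 0` and continuous up to the imaginary axis. -/
def ExpTypeRightHalfPlane (f : ℂ → ℂ) : Prop :=
  DiffContOnCl ℂ f {z | 0 < z.re} ∧
    ∃ C τ : ℝ, ∀ z : ℂ, 0 ≤ z.re → ‖f z‖ ≤ C * Real.exp (τ * ‖z‖)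

/-! ### Comparison on half-discs -/

/-- The open right half of the disc of radius `ρ` about the origin. -/
def halfDisc (ρ : ℝ) : Set ℂ := {z | 0 < z.re} ∩ Metric.ball 0 ρ

/-- The function `z log (ρ / z)`, set to `0` at the origin. Its real part is a harmonic substitute
for `(π / 2) |Im z|` on the boundary of `halfDisc ρ`: it agrees with it on the straight side and
differs from it by at most a multiple of `Re z` on the arc. -/
noncomputable def mulLogDiv (ρ : ℝ) (z : ℂ) : ℂ := z * Real.log ρ - z * Complex.log z

lemma continuousAt_mul_log {z : ℂ} (hz : 0 ≤ z.re) :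
    ContinuousAt (fun w : ℂ => w * Complex.log w) z := by
  rcases eq_or_ne z 0 with rfl | hz0
  · have hbound : ∀ w : ℂ, ‖w * Complex.log w‖ ≤ |‖w‖ * Real.log ‖w‖| + ‖w‖ * Real.pi := by
      intro w
      rw [norm_mul, abs_mul, abs_norm, ← mul_add]
      gcongr
      calc ‖Complex.log w‖ ≤ |(Complex.log w).re| + |(Complex.log w).im| :=
            Complex.norm_le_abs_re_add_abs_im _
        _ ≤ |Real.log ‖w‖| + Real.pi := by
            rw [Complex.log_re, Complex.log_im]
            gcongr
            exact Complex.abs_arg_le_pi w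
    have hcont : Continuous fun w : ℂ => |‖w‖ * Real.log ‖w‖| + ‖w‖ * Real.pi :=
      (Real.continuous_mul_log.comp continuous_norm).abs.add (by fun_prop)
    have hlim : Tendsto (fun w : ℂ => |‖w‖ * Real.log ‖w‖| + ‖w‖ * Real.pi) (nhds 0) (nhds 0) := by
      simpa using hcont.tendsto 0
    simpa [ContinuousAt] using squeeze_zero_norm hbound hlim
  · have hslit : z ∈ Complex.slitPlane := by
      rw [Complex.mem_slitPlane_iff]
      by_contra! hc
      exact hz0 (Complex.ext (le_antisymm hc.1 hz) hc.2)
    exact continuousAt_id.mul (continuousAt_clog hslit)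

lemma mulLogDiv_re (ρ : ℝ) (z : ℂ) :
    (mulLogDiv ρ z).re = z.re * (Real.log ρ - Real.log ‖z‖) + z.arg * z.im := by
  simp only [mulLogDiv, Complex.sub_re, Complex.mul_re, Complex.ofReal_re, Complex.ofReal_im,
    Complex.log_re, Complex.log_im]
  ring

lemma diffContOnCl_mulLogDiv (ρ : ℝ) : DiffContOnCl ℂ (mulLogDiv ρ) {z | 0 < z.re} := by
  refine ⟨fun z hz => ?_, fun z hz => ?_⟩
  · have hlog : DifferentiableAt ℂ Complex.log z := Complex.differentiableAt_log (Or.inl hz)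
    unfold mulLogDiv
    exact DifferentiableAt.differentiableWithinAt (by fun_prop)
  · rw [Complex.closure_setOfPred_lt_re] at hz
    exact ((continuousAt_id.mul continuousAt_const).sub
      (continuousAt_mul_log hz)).continuousWithinAt

lemma isOpen_halfDisc (ρ : ℝ) : IsOpen (halfDisc ρ) :=
  (isOpen_lt continuous_const Complex.continuous_re).inter Metric.isOpen_ball

lemma isBounded_halfDisc (ρ : ℝ) : Bornology.IsBounded (halfDisc ρ) :=
  Metric.isBounded_ball.subset Set.inter_subset_right

lemma frontier_halfDisc_subset (ρ : ℝ) :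
    frontier (halfDisc ρ) ⊆ {z | 0 ≤ z.re ∧ (z.re = 0 ∨ ‖z‖ = ρ)} := by
  intro z hz
  have hclosed : IsClosed {w : ℂ | 0 ≤ w.re ∧ ‖w‖ ≤ ρ} :=
    (isClosed_le continuous_const Complex.continuous_re).inter
      (isClosed_le continuous_norm continuous_const)
  have hsub : halfDisc ρ ⊆ {w : ℂ | 0 ≤ w.re ∧ ‖w‖ ≤ ρ} :=
    fun w hw => ⟨hw.1.le, (mem_ball_zero_iff.1 hw.2).le⟩
  obtain ⟨hre, hnorm⟩ := closure_minimal hsub hclosed (frontier_subset_closure hz)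
  refine ⟨hre, ?_⟩
  by_contra! hc
  rw [(isOpen_halfDisc ρ).frontier_eq] at hz
  exact hz.2 ⟨hre.lt_of_ne' hc.1, mem_ball_zero_iff.2 (hnorm.lt_of_ne hc.2)⟩

lemma abs_im_mul_one_sub_abs_arg_le_re {z : ℂ} (hz : 0 ≤ z.re) :
    |z.im| * (1 - 2 / Real.pi * |z.arg|) ≤ z.re := by
  have harg : |z.arg| ≤ Real.pi / 2 := Complex.abs_arg_le_pi_div_two_iff.2 hz
  have hjordan : 1 - 2 / Real.pi * |z.arg| ≤ Real.cos z.arg := by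
    have h := Real.mul_le_sin (x := Real.pi / 2 - |z.arg|) (by linarith)
      (by linarith [abs_nonneg z.arg])
    rw [Real.sin_pi_div_two_sub, Real.cos_abs] at h
    exact le_of_eq_of_le (by field_simp) h
  have hcos : 0 ≤ Real.cos z.arg := Real.cos_nonneg_of_mem_Icc (abs_le.1 harg)
  calc |z.im| * (1 - 2 / Real.pi * |z.arg|) ≤ ‖z‖ * Real.cos z.arg :=
        (mul_le_mul_of_nonneg_left hjordan (abs_nonneg _)).trans
          (mul_le_mul_of_nonneg_right (Complex.abs_im_le_norm z) hcos)
    _ = z.re := Complex.norm_mul_cos_arg z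

lemma arg_mul_im_eq_abs_mul_abs (z : ℂ) : z.arg * z.im = |z.arg| * |z.im| := by
  rw [← abs_mul, abs_of_nonneg]
  rcases le_or_gt 0 z.im with him | him
  · exact mul_nonneg (Complex.arg_nonneg_iff.2 him) him
  · exact mul_nonneg_of_nonpos_of_nonpos (Complex.arg_neg_iff.2 him).le him.le

lemma mul_abs_im_le_mul_arg_mul_im_add {s : ℝ} {z : ℂ} (hz : 0 ≤ z.re) :
    s * |z.im| ≤ 2 * s / Real.pi * (z.arg * z.im) + |s| * z.re := by
  have hfactor : 0 ≤ 1 - 2 / Real.pi * |z.arg| := by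
    have hle : 2 / Real.pi * |z.arg| ≤ 2 / Real.pi * (Real.pi / 2) := by
      gcongr
      exact Complex.abs_arg_le_pi_div_two_iff.2 hz
    have hone : 2 / Real.pi * (Real.pi / 2) = 1 := by field_simp
    linarith
  have hmul : s * (|z.im| * (1 - 2 / Real.pi * |z.arg|)) ≤ |s| * z.re :=
    (mul_le_mul_of_nonneg_right (le_abs_self s) (by positivity)).trans
      (mul_le_mul_of_nonneg_left (abs_im_mul_one_sub_abs_arg_le_re hz) (abs_nonneg s))
  rw [arg_mul_im_eq_abs_mul_abs]
  calc s * |z.im| = 2 * s / Real.pi * (|z.arg| * |z.im|)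
        + s * (|z.im| * (1 - 2 / Real.pi * |z.arg|)) := by ring
    _ ≤ 2 * s / Real.pi * (|z.arg| * |z.im|) + |s| * z.re := by gcongr

lemma norm_ofReal_le_of_forall_mem_frontier_halfDisc {P : ℂ → ℂ} {C K s d ρ x : ℝ}
    (hP : DiffContOnCl ℂ P {z | 0 < z.re})
    (hbd : ∀ z ∈ frontier (halfDisc ρ), ‖P z‖ ≤ C * Real.exp (s * |z.im| + d * z.im + K * z.re))
    (hx : 0 < x) (hxρ : x < ρ) :
    ‖P x‖ ≤ C * Real.exp (2 * s / Real.pi * (x * (Real.log ρ - Real.log x)) + (K + |s|) * x) := by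
  have hdiv : ∀ (z : ℂ) (B : ℝ),
      ‖P z * Complex.exp (d * I * z - (2 * s / Real.pi : ℝ) * mulLogDiv ρ z - (K + |s| : ℝ) * z)‖
        ≤ B ↔
      ‖P z‖ ≤
        B * Real.exp (2 * s / Real.pi * (mulLogDiv ρ z).re + d * z.im + (K + |s|) * z.re) := by
    intro z B
    have hre : (d * I * z - (2 * s / Real.pi : ℝ) * mulLogDiv ρ z - (K + |s| : ℝ) * z).re =
        -(2 * s / Real.pi * (mulLogDiv ρ z).re + d * z.im + (K + |s|) * z.re) := by
      simp only [Complex.sub_re, Complex.re_ofReal_mul, mul_assoc, Complex.I_mul_re]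
      ring
    rw [norm_mul, Complex.norm_exp, hre, Real.exp_neg, ← div_eq_mul_inv,
      div_le_iff₀ (Real.exp_pos _)]
  have hG : DiffContOnCl ℂ (fun z => P z *
      Complex.exp (d * I * z - (2 * s / Real.pi : ℝ) * mulLogDiv ρ z - (K + |s| : ℝ) * z))
      (halfDisc ρ) := by
    refine (hP.smul ?_).mono Set.inter_subset_left
    refine Complex.differentiable_exp.comp_diffContOnCl ((DiffContOnCl.sub ?_ ?_).sub ?_)
    · exact Differentiable.diffContOnCl (by fun_prop)
    · exact (diffContOnCl_mulLogDiv ρ).const_smul ((2 * s / Real.pi : ℝ) : ℂ)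
    · exact Differentiable.diffContOnCl (by fun_prop)
  have hxρ' : (x : ℂ) ∈ closure (halfDisc ρ) :=
    subset_closure ⟨by simpa using hx, by simpa [abs_of_pos hx] using hxρ⟩
  have hmax := Complex.norm_le_of_forall_mem_frontier_norm_le (isBounded_halfDisc ρ) hG
    (C := C) (fun z hz => (hdiv z C).2 ?_) hxρ'
  · simpa [mulLogDiv_re, abs_of_pos hx] using (hdiv x C).1 hmax
  · obtain ⟨hre, hside⟩ := frontier_halfDisc_subset _ hz
    have hzero : z.re * (Real.log ρ - Real.log ‖z‖) = 0 := by
      rcases hside with h | h <;> simp [h]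
    have hC : 0 ≤ C := nonneg_of_mul_nonneg_left ((norm_nonneg _).trans (hbd z hz)) (Real.exp_pos _)
    refine (hbd z hz).trans ?_
    gcongr ?_ * Real.exp ?_
    rw [mulLogDiv_re, hzero, zero_add]
    linarith [mul_abs_im_le_mul_arg_mul_im_add (s := s) hre]

/-! ### Reflecting zeros in the imaginary axis -/

lemma diffContOnCl_dslope {E : Type*} [NormedAddCommGroup E] [NormedSpace ℂ E] [CompleteSpace E]
    {F : ℂ → E} {U : Set ℂ} {a : ℂ} (hU : U ∈ nhds a) (hF : DiffContOnCl ℂ F U) :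
    DiffContOnCl ℂ (dslope F a) U :=
  ⟨(Complex.differentiableOn_dslope hU).2 hF.1,
    (continuousOn_dslope (mem_of_superset hU subset_closure)).2
      ⟨hF.2, hF.1.differentiableAt hU⟩⟩

lemma exists_eq_mul_prod_sub {U : Set ℂ} (hU : IsOpen U) (S : Finset ℂ) {F : ℂ → ℂ}
    (hF : DiffContOnCl ℂ F U) (hS : ∀ l ∈ S, l ∈ U ∧ F l = 0) :
    ∃ q : ℂ → ℂ, DiffContOnCl ℂ q U ∧ ∀ z, F z = q z * ∏ l ∈ S, (z - l) := by
  induction S using Finset.induction_on generalizing F with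
  | empty => exact ⟨F, hF, by simp⟩
  | insert a S ha ih =>
    rw [Finset.forall_mem_insert] at hS
    obtain ⟨⟨haU, hFa⟩, hS⟩ := hS
    have hfactor : ∀ z, F z = (z - a) * dslope F a z := fun z => by
      simpa [hFa] using (sub_smul_dslope F a z).symm
    have hS' : ∀ l ∈ S, l ∈ U ∧ dslope F a l = 0 := fun l hl => by
      have hla : l - a ≠ 0 := sub_ne_zero.2 fun h => ha (h ▸ hl)
      exact ⟨(hS l hl).1, (mul_eq_zero.1 ((hfactor l).symm.trans (hS l hl).2)).resolve_left hla⟩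
    obtain ⟨q, hq, hFq⟩ := ih (diffContOnCl_dslope (hU.mem_nhds haU) hF) hS'
    exact ⟨q, hq, fun z => by rw [hfactor, hFq, Finset.prod_insert ha]; ring⟩

lemma norm_add_conj_sq (z l : ℂ) : ‖z + conj l‖ ^ 2 = ‖z - l‖ ^ 2 + 4 * z.re * l.re := by
  simp only [Complex.sq_norm, Complex.normSq_apply, Complex.add_re, Complex.add_im, Complex.sub_re,
    Complex.sub_im, Complex.conj_re, Complex.conj_im]
  ring

lemma norm_add_conj_le {z l : ℂ} {R : ℝ} (hR : 0 < R) (hz : 0 ≤ z.re) (hl : ‖l‖ ≤ R)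
    (h : z.re = 0 ∨ R ≤ ‖z - l‖) :
    ‖z + conj l‖ ≤ ‖z - l‖ * Real.exp (2 * z.re / R) := by
  have hcross : 4 * z.re * l.re ≤ ‖z - l‖ ^ 2 * (4 * z.re / R) := by
    rcases h with h | h
    · simp [h]
    · calc 4 * z.re * l.re ≤ 4 * z.re * R := by
            gcongr
            exact (Complex.re_le_norm l).trans hl
        _ = R ^ 2 * (4 * z.re / R) := by field_simp
        _ ≤ ‖z - l‖ ^ 2 * (4 * z.re / R) := by gcongr
  refine le_of_sq_le_sq ?_ (by positivity)
  calc ‖z + conj l‖ ^ 2 ≤ ‖z - l‖ ^ 2 * (4 * z.re / R + 1) := by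
        rw [norm_add_conj_sq]
        linarith
    _ ≤ ‖z - l‖ ^ 2 * Real.exp (4 * z.re / R) := by
        gcongr
        exact Real.add_one_le_exp _
    _ = (‖z - l‖ * Real.exp (2 * z.re / R)) ^ 2 := by
        rw [mul_pow, ← Real.exp_nat_mul]
        ring_nf

lemma sub_mul_exp_le_add {a b : ℝ} (hb : 0 ≤ b) (hba : b ≤ a) :
    (a - b) * Real.exp (2 * b / a) ≤ a + b := by
  rcases hba.eq_or_lt with rfl | hlt
  · simp [hb]
  have hsub : 0 < a - b := sub_pos.2 hlt
  have ha : 0 < a := hb.trans_lt hlt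
  have hlog := Real.le_log_one_add_of_nonneg (x := 2 * b / (a - b)) (by positivity)
  have hleft : 2 * (2 * b / (a - b)) / (2 * b / (a - b) + 2) = 2 * b / a := by
    have hden : 2 * b / (a - b) + 2 = 2 * a / (a - b) := by field_simp; ring
    rw [hden]
    field_simp
  have hright : 1 + 2 * b / (a - b) = (a + b) / (a - b) := by field_simp; ring
  rwa [hleft, hright, Real.le_log_iff_exp_le (by positivity), le_div_iff₀' hsub] at hlog

lemma norm_sub_mul_exp_le {x : ℝ} {l : ℂ} (hx : 0 ≤ x) (hl : 0 ≤ l.re) :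
    ‖(x : ℂ) - l‖ * Real.exp (2 * x * l.re / (x ^ 2 + ‖l‖ ^ 2)) ≤ ‖(x : ℂ) + conj l‖ := by
  have hsub : ‖(x : ℂ) - l‖ ^ 2 = x ^ 2 + ‖l‖ ^ 2 - 2 * x * l.re := by
    simp only [Complex.sq_norm, Complex.normSq_apply, Complex.sub_re, Complex.sub_im,
      Complex.ofReal_re, Complex.ofReal_im]
    ring
  have hadd : ‖(x : ℂ) + conj l‖ ^ 2 = x ^ 2 + ‖l‖ ^ 2 + 2 * x * l.re := by
    rw [norm_add_conj_sq, hsub, Complex.ofReal_re]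
    ring
  refine le_of_sq_le_sq ?_ (norm_nonneg _)
  rw [mul_pow, ← Real.exp_nat_mul, hsub, hadd, Nat.cast_ofNat, mul_div_assoc']
  exact sub_mul_exp_le_add (by positivity) (by linarith [sq_nonneg ‖(x : ℂ) - l‖])

-- `P` is `F` with every factor `z - l` replaced by its reflection `z + conj l`.
lemma exists_reflect_zeros {F : ℂ → ℂ} (hF : DiffContOnCl ℂ F {z | 0 < z.re}) {R : ℝ} (hR : 0 < R)
    {S : Finset ℂ} (hS : ∀ l ∈ S, 0 < l.re ∧ ‖l‖ ≤ R ∧ F l = 0) :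
    ∃ P : ℂ → ℂ, DiffContOnCl ℂ P {z | 0 < z.re} ∧
      (∀ z ∈ frontier (halfDisc (2 * R)), ‖P z‖ ≤ ‖F z‖ * Real.exp (2 * (S.card / R) * z.re)) ∧
      ∀ x : ℝ, 0 ≤ x →
        ‖F x‖ * Real.exp (∑ l ∈ S, 2 * x * l.re / (x ^ 2 + ‖l‖ ^ 2)) ≤ ‖P x‖ := by
  obtain ⟨q, hq, hFq⟩ := exists_eq_mul_prod_sub
    (isOpen_lt continuous_const Complex.continuous_re) S hF fun l hl => ⟨(hS l hl).1, (hS l hl).2.2⟩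
  refine ⟨fun z => q z * ∏ l ∈ S, (z + conj l),
    hq.smul (Differentiable.diffContOnCl (by fun_prop)), fun z hz => ?_, fun x hx => ?_⟩
  · obtain ⟨hre, hside⟩ := frontier_halfDisc_subset _ hz
    have hfactor : ∀ l ∈ S, ‖z + conj l‖ ≤ ‖z - l‖ * Real.exp (2 * z.re / R) := fun l hl =>
      norm_add_conj_le hR hre (hS l hl).2.1 <| hside.imp_right fun h => by
        linarith [norm_sub_norm_le z l, (hS l hl).2.1]
    rw [hFq, norm_mul, norm_prod, norm_mul, norm_prod, mul_assoc]
    gcongr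
    calc ∏ l ∈ S, ‖z + conj l‖ ≤ ∏ l ∈ S, ‖z - l‖ * Real.exp (2 * z.re / R) :=
          Finset.prod_le_prod (fun _ _ => norm_nonneg _) hfactor
      _ = (∏ l ∈ S, ‖z - l‖) * Real.exp (2 * (S.card / R) * z.re) := by
          rw [Finset.prod_mul_distrib, Finset.prod_const, ← Real.exp_nat_mul]
          ring_nf
  · rw [hFq, norm_mul, norm_prod, norm_mul, norm_prod, mul_assoc, Real.exp_sum,
      ← Finset.prod_mul_distrib]
    gcongr with l hl
    exact norm_sub_mul_exp_le hx (hS l hl).1.le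

lemma norm_mul_exp_sum_le {F : ℂ → ℂ} (hF : DiffContOnCl ℂ F {z | 0 < z.re}) {C K s d R x : ℝ}
    (hb : ∀ z : ℂ, 0 ≤ z.re → ‖F z‖ ≤ C * Real.exp (s * |z.im| + d * z.im + K * z.re))
    {S : Finset ℂ} (hS : ∀ l ∈ S, 0 < l.re ∧ ‖l‖ ≤ R ∧ F l = 0) (hx : 0 < x) (hxR : x < 2 * R) :
    ‖F x‖ * Real.exp (∑ l ∈ S, 2 * x * l.re / (x ^ 2 + ‖l‖ ^ 2)) ≤
      C * Real.exp (2 * s / Real.pi * (x * (Real.log (2 * R) - Real.log x)) +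
        (K + 2 * (S.card / R) + |s|) * x) := by
  obtain ⟨P, hP, hPF, hFP⟩ := exists_reflect_zeros hF (by linarith) hS
  refine (hFP x hx.le).trans
    (norm_ofReal_le_of_forall_mem_frontier_halfDisc (d := d) hP (fun z hz => ?_) hx hxR)
  calc ‖P z‖ ≤ C * Real.exp (s * |z.im| + d * z.im + K * z.re)
        * Real.exp (2 * (S.card / R) * z.re) :=
        (hPF z hz).trans <| mul_le_mul_of_nonneg_right
          (hb z (frontier_halfDisc_subset _ hz).1) (Real.exp_pos _).le
    _ = C * Real.exp (s * |z.im| + d * z.im + (K + 2 * (S.card / R)) * z.re) := by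
        rw [mul_assoc, ← Real.exp_add]
        ring_nf

/-! ### The Phragmén–Lindelöf bound -/

lemma exists_forall_le_mul_exp_of_eventually_le {g : ℝ → ℝ} (hg : ContinuousOn g (Set.Ici 0))
    {a : ℝ} (h : ∀ᶠ r in atTop, g r ≤ Real.exp (a * r)) :
    ∃ C, ∀ y, 0 ≤ y → g y ≤ C * Real.exp (a * y) := by
  obtain ⟨T, hT⟩ := eventually_atTop.1 h
  obtain ⟨B, hB⟩ := (isCompact_Icc (a := 0) (b := T)).bddAbove_image
    (f := fun y => g y / Real.exp (a * y))
    ((hg.mono Set.Icc_subset_Ici_self).div (by fun_prop) fun y _ => (Real.exp_pos _).ne')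
  refine ⟨max B 1, fun y hy => ?_⟩
  rw [← div_le_iff₀ (Real.exp_pos _)]
  rcases le_total y T with hyT | hTy
  · exact (hB ⟨y, ⟨hy, hyT⟩, rfl⟩).trans (le_max_left _ _)
  · exact ((div_le_one (Real.exp_pos _)).2 (hT y hTy)).trans (le_max_right _ _)

lemma norm_mul_cexp_le_iff {w z : ℂ} {σ τ C : ℝ} :
    ‖w * Complex.exp ((σ * I - τ) * z)‖ ≤ C ↔ ‖w‖ ≤ C * Real.exp (σ * z.im + τ * z.re) := by
  have hre : ((σ * I - τ) * z).re = -(σ * z.im + τ * z.re) := by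
    simp only [sub_mul, mul_assoc, Complex.sub_re, Complex.re_ofReal_mul, Complex.I_mul_re]
    ring
  rw [norm_mul, Complex.norm_exp, hre, Real.exp_neg, ← div_eq_mul_inv,
    div_le_iff₀ (Real.exp_pos _)]

namespace ExpTypeRightHalfPlane

variable {f : ℂ → ℂ}

lemma continuousOn (hf : ExpTypeRightHalfPlane f) : ContinuousOn f {z | 0 ≤ z.re} := by
  simpa only [Complex.closure_setOfPred_lt_re] using hf.1.continuousOn

lemma mul_cexp (hf : ExpTypeRightHalfPlane f) (c : ℂ) :
    ExpTypeRightHalfPlane fun z => f z * Complex.exp (c * z) := by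
  obtain ⟨hdiff, C, τ, hbound⟩ := hf
  refine ⟨hdiff.smul (Differentiable.diffContOnCl (by fun_prop)), C, τ + ‖c‖, fun z hz => ?_⟩
  calc ‖f z * Complex.exp (c * z)‖ ≤ C * Real.exp (τ * ‖z‖) * Real.exp (‖c‖ * ‖z‖) := by
        rw [norm_mul, ← norm_mul c]
        exact mul_le_mul (hbound z hz) (Complex.norm_exp_le_exp_norm _) (norm_nonneg _)
          ((norm_nonneg _).trans (hbound z hz))
    _ = C * Real.exp ((τ + ‖c‖) * ‖z‖) := by rw [mul_assoc, ← Real.exp_add, add_mul]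

lemma isBigO_exp (hf : ExpTypeRightHalfPlane f) {s : Set ℂ} (hs : s ⊆ {z | 0 < z.re}) :
    ∃ c < (2 : ℝ), ∃ B,
      f =O[Bornology.cobounded ℂ ⊓ 𝓟 s] fun z => Real.exp (B * ‖z‖ ^ c) := by
  obtain ⟨-, C, τ, hbound⟩ := hf
  refine ⟨1, one_lt_two, τ, Asymptotics.IsBigO.of_bound C ?_⟩
  filter_upwards [mem_inf_of_right (mem_principal_self s)] with z hz
  simpa only [Real.rpow_one, Real.norm_eq_abs, Real.abs_exp] using hbound z (hs hz).le

lemma norm_le_of_im_nonneg (hf : ExpTypeRightHalfPlane f) {C σ τ : ℝ}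
    (hre : ∀ x : ℝ, 0 ≤ x → ‖f x‖ ≤ C * Real.exp (τ * x))
    (him : ∀ y : ℝ, 0 ≤ y → ‖f (y * I)‖ ≤ C * Real.exp (σ * y))
    {z : ℂ} (hzre : 0 ≤ z.re) (hzim : 0 ≤ z.im) :
    ‖f z‖ ≤ C * Real.exp (σ * z.im + τ * z.re) := by
  have hsub : Set.Ioi 0 ×ℂ Set.Ioi 0 ⊆ {z : ℂ | 0 < z.re} := fun z hz => hz.1
  have hg := hf.mul_cexp (σ * I - τ)
  rw [← norm_mul_cexp_le_iff]
  exact PhragmenLindelof.quadrant_I (f := fun w => f w * Complex.exp ((σ * I - τ) * w))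
    (hg.1.mono hsub) (hg.isBigO_exp hsub)
    (fun x hx => norm_mul_cexp_le_iff.2 (by simpa using hre x hx))
    (fun y hy => norm_mul_cexp_le_iff.2 (by simpa using him y hy)) hzre hzim

lemma norm_le_of_im_nonpos (hf : ExpTypeRightHalfPlane f) {C σ τ : ℝ}
    (hre : ∀ x : ℝ, 0 ≤ x → ‖f x‖ ≤ C * Real.exp (τ * x))
    (him : ∀ y : ℝ, 0 ≤ y → ‖f (y * -I)‖ ≤ C * Real.exp (σ * y))
    {z : ℂ} (hzre : 0 ≤ z.re) (hzim : z.im ≤ 0) :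
    ‖f z‖ ≤ C * Real.exp (-σ * z.im + τ * z.re) := by
  have hsub : Set.Ioi 0 ×ℂ Set.Iio 0 ⊆ {z : ℂ | 0 < z.re} := fun z hz => hz.1
  have hg := hf.mul_cexp ((-σ : ℝ) * I - τ)
  rw [← norm_mul_cexp_le_iff]
  exact PhragmenLindelof.quadrant_IV (f := fun w => f w * Complex.exp (((-σ : ℝ) * I - τ) * w))
    (hg.1.mono hsub) (hg.isBigO_exp hsub)
    (fun x hx => norm_mul_cexp_le_iff.2 (by simpa using hre x hx))
    (fun y hy => norm_mul_cexp_le_iff.2 (by simpa using him (-y) (neg_nonneg.2 hy))) hzre hzim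

lemma exists_norm_le (hf : ExpTypeRightHalfPlane f) {a b : ℝ}
    (ha : ∀ᶠ r : ℝ in atTop, ‖f (r * I)‖ ≤ Real.exp (a * r))
    (hb : ∀ᶠ r : ℝ in atTop, ‖f (r * -I)‖ ≤ Real.exp (b * r)) :
    ∃ C K, ∀ z : ℂ, 0 ≤ z.re →
      ‖f z‖ ≤ C * Real.exp ((a + b) / 2 * |z.im| + (a - b) / 2 * z.im + K * z.re) := by
  obtain ⟨C₀, τ, hC₀⟩ := hf.2
  obtain ⟨C₁, hC₁⟩ := exists_forall_le_mul_exp_of_eventually_le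
    (hf.continuousOn.norm.comp (f := fun r : ℝ => (r * I : ℂ)) (by fun_prop) fun r _ => by simp) ha
  obtain ⟨C₂, hC₂⟩ := exists_forall_le_mul_exp_of_eventually_le
    (hf.continuousOn.norm.comp (f := fun r : ℝ => (r * -I : ℂ)) (by fun_prop) fun r _ => by simp) hb
  set C := max C₀ (max C₁ C₂)
  have hreal : ∀ x : ℝ, 0 ≤ x → ‖f x‖ ≤ C * Real.exp (τ * x) := fun x hx => by
    have hfx : ‖f x‖ ≤ C₀ * Real.exp (τ * x) := by simpa [abs_of_nonneg hx] using hC₀ x (by simpa)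
    exact hfx.trans (by gcongr; exact le_max_left _ _)
  refine ⟨C, τ, fun z hz => ?_⟩
  rcases le_total 0 z.im with him | him
  · refine (hf.norm_le_of_im_nonneg (σ := a) hreal (fun y hy => (hC₁ y hy).trans ?_)
      hz him).trans_eq (by rw [abs_of_nonneg him]; ring_nf)
    gcongr
    exact (le_max_left _ _).trans (le_max_right _ _)
  · refine (hf.norm_le_of_im_nonpos (σ := b) hreal (fun y hy => (hC₂ y hy).trans ?_)
      hz him).trans_eq (by rw [abs_of_nonpos him]; ring_nf)
    gcongr
    exact (le_max_right _ _).trans (le_max_right _ _)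

lemma exists_sum_re_div_le (hf : ExpTypeRightHalfPlane f) {a b : ℝ}
    (ha : ∀ᶠ r : ℝ in atTop, ‖f (r * I)‖ ≤ Real.exp (a * r))
    (hb : ∀ᶠ r : ℝ in atTop, ‖f (r * -I)‖ ≤ Real.exp (b * r))
    {x : ℝ} (hx : 0 < x) (hfx : f x ≠ 0) :
    ∃ E, ∀ (S : Finset ℂ) (R : ℝ), x < 2 * R → (∀ l ∈ S, 0 < l.re ∧ ‖l‖ ≤ R ∧ f l = 0) →
      ∑ l ∈ S, l.re / (x ^ 2 + ‖l‖ ^ 2) ≤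
        E + (a + b) / 2 / Real.pi * Real.log R + S.card / R := by
  obtain ⟨C, K, hC⟩ := hf.exists_norm_le ha hb
  set s := (a + b) / 2
  refine ⟨(Real.log C - Real.log ‖f x‖) / (2 * x) + s / Real.pi * (Real.log 2 - Real.log x)
    + (K + |s|) / 2, fun S R hxR hS => ?_⟩
  have hfx' : 0 < ‖f x‖ := norm_pos_iff.2 hfx
  have hC0 : 0 < C := pos_of_mul_pos_left (hfx'.trans_le (hC x (by simpa using hx.le)))
    (Real.exp_pos _).le
  have hlog := Real.log_le_log (by positivity) (norm_mul_exp_sum_le hf.1 hC hS hx hxR)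
  rw [Real.log_mul hfx'.ne' (Real.exp_pos _).ne', Real.log_mul hC0.ne' (Real.exp_pos _).ne',
    Real.log_exp, Real.log_exp, Real.log_mul two_ne_zero (by linarith : R ≠ 0)] at hlog
  have hsum : ∑ l ∈ S, 2 * x * l.re / (x ^ 2 + ‖l‖ ^ 2) =
      2 * x * ∑ l ∈ S, l.re / (x ^ 2 + ‖l‖ ^ 2) := by
    rw [Finset.mul_sum]
    exact Finset.sum_congr rfl fun l _ => mul_div_assoc _ _ _
  rw [hsum] at hlog
  calc ∑ l ∈ S, l.re / (x ^ 2 + ‖l‖ ^ 2) ≤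
        (Real.log C + (2 * s / Real.pi * (x * (Real.log 2 + Real.log R - Real.log x)) +
          (K + 2 * (S.card / R) + |s|) * x) - Real.log ‖f x‖) / (2 * x) := by
        rw [le_div_iff₀' (by positivity)]
        linarith
    _ = _ := by
        field_simp
        ring

end ExpTypeRightHalfPlane

/-! ### Counting zeros -/

lemma finite_setOf_mem_and_eq_zero {𝕜 E : Type*} [NontriviallyNormedField 𝕜]
    [NormedAddCommGroup E] [NormedSpace 𝕜 E] {f : 𝕜 → E} {U K : Set 𝕜}
    (hf : AnalyticOnNhd 𝕜 f U) (hU : IsPreconnected U) (hf0 : ¬ Set.EqOn f 0 U)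
    (hK : IsCompact K) (hKU : K ⊆ U) : {z | z ∈ K ∧ f z = 0}.Finite := by
  by_contra hinf
  obtain ⟨z₀, hz₀, hacc⟩ :=
    Set.Infinite.exists_accPt_of_subset_isCompact hinf hK (Set.sep_subset _ _)
  exact hf0 <| hf.eqOn_zero_of_preconnected_of_frequently_eq_zero hU (hKU hz₀) <|
    (accPt_iff_frequently_nhdsNE.1 hacc).mono fun _ hz => hz.2

lemma exists_pos_forall_le_norm {E : Type*} [NormedAddCommGroup E] {Λ : Set E}
    (hfin : ∀ r : ℝ, {z | z ∈ Λ ∧ ‖z‖ ≤ r}.Finite) (h0 : 0 ∉ Λ) :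
    ∃ ρ > 0, ∀ l ∈ Λ, ρ ≤ ‖l‖ := by
  obtain ⟨ε, hε, hball⟩ := Metric.mem_nhds_iff.1 <|
    (hfin 1).isClosed.isOpen_compl.mem_nhds (x := 0) fun h => h0 h.1
  refine ⟨min ε 1, by positivity, fun l hl => ?_⟩
  by_contra! hlt
  exact hball (mem_ball_zero_iff.2 (hlt.trans_le (min_le_left _ _)))
    ⟨hl, (hlt.trans_le (min_le_right _ _)).le⟩

lemma exists_injective_of_lt_card {α : Type*} {t : ℕ → Finset α} (ht : ∀ k, k < (t k).card) :
    ∃ l : ℕ → α, Function.Injective l ∧ ∀ k, l k ∈ t k := by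
  classical
  refine (Finset.all_card_le_biUnion_card_iff_exists_injective t).1 fun s => ?_
  rcases s.eq_empty_or_nonempty with rfl | hs
  · simp
  set k := s.max' hs
  have hsub : s ⊆ Finset.range (k + 1) := fun j hj =>
    Finset.mem_range_succ_iff.2 (s.le_max' j hj)
  calc s.card ≤ k + 1 := by simpa using Finset.card_le_card hsub
    _ ≤ (t k).card := ht k
    _ ≤ (s.biUnion t).card :=
        Finset.card_le_card (Finset.subset_biUnion_of_mem t (s.max'_mem hs))

lemma exists_injective_norm_le {E : Type*} [Norm E] {Λ : Set E}
    (hfin : ∀ r : ℝ, {z | z ∈ Λ ∧ ‖z‖ ≤ r}.Finite) {δ : ℝ} (hδ : 0 < δ)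
    (hdens : ∀ᶠ r : ℝ in atTop, δ ≤ Nat.card {z // z ∈ Λ ∧ ‖z‖ ≤ r} / r) :
    ∃ b > 0, ∃ l : ℕ → E, Function.Injective l ∧ ∀ k, l k ∈ Λ ∧ ‖l k‖ ≤ (k + b) / δ := by
  obtain ⟨T, hT⟩ := eventually_atTop.1 hdens
  set r : ℕ → ℝ := fun k => (k + 1) / δ + max T 0
  have hr0 : ∀ k, 0 < r k := fun k => by positivity
  have hrT : ∀ k, T ≤ r k := fun k =>
    (le_max_left T 0).trans (le_add_of_nonneg_left (by positivity))
  have hcard : ∀ k, k < (hfin (r k)).toFinset.card := fun k => by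
    have hle : δ * r k ≤ (hfin (r k)).toFinset.card := by
      rw [← Set.ncard_eq_toFinset_card _ (hfin (r k)), ← Nat.card_coe_set_eq]
      exact (le_div_iff₀ (hr0 k)).1 (hT (r k) (hrT k))
    have hlt : (k : ℝ) < δ * r k := by
      rw [mul_add, mul_div_cancel₀ _ hδ.ne']
      linarith [mul_nonneg hδ.le (le_max_right T 0)]
    exact_mod_cast hlt.trans_le hle
  obtain ⟨l, hinj, hl⟩ := exists_injective_of_lt_card hcard
  refine ⟨1 + δ * max T 0, by positivity, l, hinj, fun k => ?_⟩
  obtain ⟨hlΛ, hlr⟩ := (hfin (r k)).mem_toFinset.1 (hl k)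
  refine ⟨hlΛ, hlr.trans_eq ?_⟩
  simp only [r]
  field_simp
  ring

lemma log_sub_log_le_sum {b : ℝ} (hb : 0 < b) (n : ℕ) :
    Real.log (n + b) - Real.log b ≤ ∑ k ∈ Finset.range n, 1 / (k + b) := by
  have hstep : ∀ k : ℕ, Real.log ((k + 1 : ℕ) + b) - Real.log (k + b) ≤ 1 / (k + b) := fun k => by
    have hkb : 0 < k + b := by positivity
    have hk1b : 0 < (k + 1 : ℕ) + b := by positivity
    rw [← Real.log_div hk1b.ne' hkb.ne']
    refine (Real.log_le_sub_one_of_pos (by positivity)).trans_eq ?_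
    rw [div_sub_one hkb.ne']
    push_cast
    ring
  calc Real.log (n + b) - Real.log b
      = ∑ k ∈ Finset.range n, (Real.log ((k + 1 : ℕ) + b) - Real.log (k + b)) := by
        rw [Finset.sum_range_sub fun k : ℕ => Real.log (k + b)]
        simp
    _ ≤ ∑ k ∈ Finset.range n, 1 / (k + b) := Finset.sum_le_sum fun k _ => hstep k

lemma mul_log_sub_log_le_sum_re_div {l : ℕ → ℂ} {κ δ b x : ℝ} (hκ : 0 ≤ κ) (hδ : 0 < δ)
    (hb : 0 < b) (hx : 0 < x) (hre : ∀ k, κ * ‖l k‖ ≤ (l k).re) (hxl : ∀ k, x ≤ ‖l k‖)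
    (hl : ∀ k, ‖l k‖ + x ≤ (k + b) / δ) (n : ℕ) :
    κ * δ * (Real.log (n + b) - Real.log b) ≤
      ∑ k ∈ Finset.range n, (l k).re / (x ^ 2 + ‖l k‖ ^ 2) := by
  have hterm : ∀ k : ℕ, κ * δ * (1 / (k + b)) ≤ (l k).re / (x ^ 2 + ‖l k‖ ^ 2) := fun k => by
    have hlpos : 0 < ‖l k‖ := hx.trans_le (hxl k)
    calc κ * δ * (1 / (k + b)) = κ * (1 / ((k + b) / δ)) := by rw [one_div_div]; ring
      _ ≤ κ * (1 / (‖l k‖ + x)) := by gcongr; exact hl k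
      _ ≤ κ * (‖l k‖ / (x ^ 2 + ‖l k‖ ^ 2)) := by
          refine mul_le_mul_of_nonneg_left ?_ hκ
          rw [div_le_div_iff₀ (by positivity) (by positivity)]
          linarith [mul_le_mul_of_nonneg_left (hxl k) hx.le]
      _ ≤ (l k).re / (x ^ 2 + ‖l k‖ ^ 2) := by
          rw [← mul_div_assoc]
          gcongr
          exact hre k
  calc κ * δ * (Real.log (n + b) - Real.log b)
      ≤ κ * δ * ∑ k ∈ Finset.range n, 1 / (k + b) := by
        gcongr
        exact log_sub_log_le_sum hb n
    _ ≤ ∑ k ∈ Finset.range n, (l k).re / (x ^ 2 + ‖l k‖ ^ 2) := by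
        rw [Finset.mul_sum]
        exact Finset.sum_le_sum fun k _ => hterm k

lemma le_of_eventually_mul_le {ι : Type*} {F : Filter ι} [F.NeBot] {g : ι → ℝ}
    (hg : Tendsto g F atTop) {a b c : ℝ} (h : ∀ᶠ i in F, a * g i ≤ c + b * g i) : a ≤ b := by
  by_contra! hlt
  obtain ⟨i, hi, hgt⟩ :=
    (h.and ((hg.const_mul_atTop (sub_pos.2 hlt)).eventually_gt_atTop c)).exists
  linarith

lemma mul_le_of_forall_sum_re_div_le {l : ℕ → ℂ} {κ δ b x E σ : ℝ} (hκ : 0 ≤ κ) (hδ : 0 < δ)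
    (hb : 0 < b) (hx : 0 < x) (hre : ∀ k, κ * ‖l k‖ ≤ (l k).re) (hxl : ∀ k, x ≤ ‖l k‖)
    (hl : ∀ k, ‖l k‖ + x ≤ (k + b) / δ)
    (hsum : ∀ n : ℕ, ∑ k ∈ Finset.range n, (l k).re / (x ^ 2 + ‖l k‖ ^ 2) ≤
      E + σ * Real.log ((n + b) / δ) + n / ((n + b) / δ)) :
    κ * δ ≤ σ := by
  have hlog : Tendsto (fun n : ℕ => Real.log (n + b)) atTop atTop :=
    Real.tendsto_log_atTop.comp (tendsto_atTop_add_const_right _ b tendsto_natCast_atTop_atTop)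
  refine le_of_eventually_mul_le hlog (c := E - σ * Real.log δ + δ + κ * δ * Real.log b)
    (Eventually.of_forall fun n => ?_)
  have hlower := mul_log_sub_log_le_sum_re_div hκ hδ hb hx hre hxl hl n
  have hupper := hsum n
  rw [Real.log_div (by positivity) hδ.ne'] at hupper
  have hn : n / ((n + b) / δ) ≤ δ := by
    rw [div_div_eq_mul_div, div_le_iff₀ (by positivity)]
    linarith [mul_pos hδ hb]
  linarith

namespace ExpTypeRightHalfPlane

variable {f : ℂ → ℂ}

lemma exists_mem_Ioo_ne_zero (hf : ExpTypeRightHalfPlane f)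
    (hf0 : ¬ Set.EqOn f 0 {z | 0 < z.re}) {ρ : ℝ} (hρ : 0 < ρ) :
    ∃ x ∈ Set.Ioo 0 ρ, f x ≠ 0 := by
  by_contra! hzero
  set J : Set ℂ := (fun x : ℝ => (x : ℂ)) '' Set.Icc (ρ / 3) (ρ / 2)
  have hJre : J ⊆ {z | 0 < z.re} := by
    rintro _ ⟨x, hx, rfl⟩
    exact (show 0 < ρ / 3 by positivity).trans_le hx.1
  have hJzero : ∀ z ∈ J, f z = 0 := by
    rintro _ ⟨x, hx, rfl⟩
    exact hzero x ⟨by linarith [hx.1], by linarith [hx.2]⟩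
  have hJinf : J.Infinite :=
    (Set.Icc_infinite (by linarith)).image Complex.ofReal_injective.injOn
  have hopen : IsOpen {z : ℂ | 0 < z.re} := isOpen_lt continuous_const Complex.continuous_re
  refine hJinf ((finite_setOf_mem_and_eq_zero (hf.1.differentiableOn.analyticOnNhd hopen)
    (convex_halfSpace_re_gt 0).isPreconnected hf0
    (isCompact_Icc.image Complex.continuous_ofReal) hJre).subset fun z hz => ⟨hz, hJzero z hz⟩)

lemma add_nonneg_of_eventually_norm_le (hf : ExpTypeRightHalfPlane f)
    (hf0 : ¬ Set.EqOn f 0 {z | 0 < z.re}) {a b : ℝ}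
    (ha : ∀ᶠ r : ℝ in atTop, ‖f (r * I)‖ ≤ Real.exp (a * r))
    (hb : ∀ᶠ r : ℝ in atTop, ‖f (r * -I)‖ ≤ Real.exp (b * r)) :
    0 ≤ (a + b) / 2 / Real.pi := by
  obtain ⟨x, hx, hfx⟩ := hf.exists_mem_Ioo_ne_zero hf0 one_pos
  obtain ⟨E, hE⟩ := hf.exists_sum_re_div_le ha hb hx.1 hfx
  refine le_of_eventually_mul_le Real.tendsto_log_atTop (c := E) ?_
  filter_upwards [eventually_gt_atTop x] with R hR
  simpa using hE ∅ R (by linarith [hx.1]) (by simp)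

lemma mul_le_of_eventually_le_card_div (hf : ExpTypeRightHalfPlane f)
    (hf0 : ¬ Set.EqOn f 0 {z | 0 < z.re}) {κ : ℝ} (hκ : 0 ≤ κ) {Λ : Set ℂ}
    (hΛ : ∀ l ∈ Λ, 0 < l.re ∧ κ * ‖l‖ ≤ l.re) (hfin : ∀ r : ℝ, {z | z ∈ Λ ∧ ‖z‖ ≤ r}.Finite)
    (hzero : ∀ l ∈ Λ, f l = 0) {δ : ℝ}
    (hδ : ∀ᶠ r : ℝ in atTop, δ ≤ Nat.card {z // z ∈ Λ ∧ ‖z‖ ≤ r} / r) {a b : ℝ}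
    (ha : ∀ᶠ r : ℝ in atTop, ‖f (r * I)‖ ≤ Real.exp (a * r))
    (hb : ∀ᶠ r : ℝ in atTop, ‖f (r * -I)‖ ≤ Real.exp (b * r)) :
    κ * δ ≤ (a + b) / 2 / Real.pi := by
  rcases le_or_gt δ 0 with hδ0 | hδ0
  · exact (mul_nonpos_of_nonneg_of_nonpos hκ hδ0).trans
      (hf.add_nonneg_of_eventually_norm_le hf0 ha hb)
  obtain ⟨ρ, hρ, hρΛ⟩ := exists_pos_forall_le_norm hfin fun h => by simpa using (hΛ 0 h).1
  obtain ⟨x, ⟨hx, hxρ⟩, hfx⟩ := hf.exists_mem_Ioo_ne_zero hf0 hρ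
  obtain ⟨E, hE⟩ := hf.exists_sum_re_div_le ha hb hx hfx
  obtain ⟨β, hβ, l, hinj, hl⟩ := exists_injective_norm_le hfin hδ0 hδ
  set t := β + δ * x with ht
  have htpos : 0 < t := by positivity
  have hlx : ∀ k, ‖l k‖ + x ≤ (k + t) / δ := fun k => by
    have hsplit : (k + t) / δ = (k + β) / δ + x := by rw [ht]; field_simp; ring
    linarith [(hl k).2]
  have hupper : ∀ n : ℕ, ∑ k ∈ Finset.range n, (l k).re / (x ^ 2 + ‖l k‖ ^ 2) ≤
      E + (a + b) / 2 / Real.pi * Real.log ((n + t) / δ) + n / ((n + t) / δ) := fun n => by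
    have hxR : x ≤ (n + t) / δ := by linarith [hlx n, norm_nonneg (l n)]
    have hS : ∀ z ∈ (Finset.range n).map ⟨l, hinj⟩, 0 < z.re ∧ ‖z‖ ≤ (n + t) / δ ∧ f z = 0 := by
      simp only [Finset.mem_map, Function.Embedding.coeFn_mk, forall_exists_index, and_imp,
        forall_apply_eq_imp_iff₂]
      intro k hk
      have hkn : (k + t) / δ ≤ (n + t) / δ := by
        gcongr
        exact (Finset.mem_range.1 hk).le
      exact ⟨(hΛ _ (hl k).1).1, by linarith [hlx k], hzero _ (hl k).1⟩
    simpa only [Finset.sum_map, Finset.card_map, Finset.card_range, Function.Embedding.coeFn_mk]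
      using hE ((Finset.range n).map ⟨l, hinj⟩) ((n + t) / δ) (by linarith) hS
  exact mul_le_of_forall_sum_re_div_le hκ hδ0 htpos hx (fun k => (hΛ _ (hl k).1).2)
    (fun k => hxρ.le.trans (hρΛ _ (hl k).1)) hlx hupper

end ExpTypeRightHalfPlane

/-! ### Indicators and lower density -/

lemma eventually_le_exp_mul_of_log_div_le {g : ℝ → ℝ} {a : ℝ}
    (h : ∀ᶠ r in atTop, Real.log (g r) / r ≤ a) : ∀ᶠ r in atTop, g r ≤ Real.exp (a * r) := by
  filter_upwards [h, eventually_gt_atTop 0] with r hr hr0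
  rcases le_or_gt (g r) 0 with hg | hg
  · exact hg.trans (Real.exp_pos _).le
  · exact (Real.log_le_iff_le_exp hg).1 ((div_le_iff₀ hr0).1 hr)

lemma norm_mul_cos_le_re {z : ℂ} {γ : ℝ} (hγ : γ ≤ Real.pi) (hz : |z.arg| ≤ γ) :
    ‖z‖ * Real.cos γ ≤ z.re :=
  calc ‖z‖ * Real.cos γ ≤ ‖z‖ * Real.cos |z.arg| := by
        gcongr
        exact Real.cos_le_cos_of_nonneg_of_le_pi (abs_nonneg _) hγ hz
    _ = z.re := by rw [Real.cos_abs, Complex.norm_mul_cos_arg]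

namespace ExpTypeRightHalfPlane

variable {f : ℂ → ℂ}

lemma isBoundedUnder_log_norm_div (hf : ExpTypeRightHalfPlane f) {θ : ℝ} (hθ : 0 ≤ Real.cos θ) :
    IsBoundedUnder (· ≤ ·) atTop fun r : ℝ => Real.log ‖f (r * Complex.exp (θ * I))‖ / r := by
  obtain ⟨-, C, τ, hbound⟩ := hf
  refine ⟨Real.posLog C + |τ|, ?_⟩
  rw [eventually_map]
  filter_upwards [eventually_ge_atTop 1] with r hr
  have hr0 : 0 < r := one_pos.trans_le hr
  set z : ℂ := r * Complex.exp (θ * I) with hz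
  have hnorm : ‖z‖ = r := by
    rw [hz, norm_mul, Complex.norm_exp_ofReal_mul_I, mul_one, Complex.norm_of_nonneg hr0.le]
  have hre : 0 ≤ z.re := by
    rw [hz, Complex.re_ofReal_mul, Complex.exp_ofReal_mul_I_re]
    positivity
  have hτ : Real.posLog (Real.exp (τ * r)) ≤ |τ| * r := by
    rw [Real.posLog_apply, Real.log_exp]
    exact max_le (by positivity) (by gcongr; exact le_abs_self τ)
  rw [div_le_iff₀ hr0]
  calc Real.log ‖f z‖ ≤ Real.posLog (C * Real.exp (τ * r)) :=
        (le_max_right 0 _).trans (Real.posLog_le_posLog (norm_nonneg _) (hnorm ▸ hbound z hre))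
    _ ≤ Real.posLog C + |τ| * r := Real.posLog_mul.trans (by gcongr)
    _ ≤ (Real.posLog C + |τ|) * r := by
        rw [add_mul]
        gcongr
        exact le_mul_of_one_le_right Real.posLog_nonneg hr

lemma le_indicatorFn_add_of_forall (hf : ExpTypeRightHalfPlane f) {c : ℝ}
    (h : ∀ a b : ℝ, (∀ᶠ r : ℝ in atTop, ‖f (r * I)‖ ≤ Real.exp (a * r)) →
      (∀ᶠ r : ℝ in atTop, ‖f (r * -I)‖ ≤ Real.exp (b * r)) → c ≤ a + b) :
    c ≤ indicatorFn f (Real.pi / 2) + indicatorFn f (-(Real.pi / 2)) := by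
  have hI : Complex.exp ((Real.pi / 2 : ℝ) * I) = I := by simp
  have hnegI : Complex.exp ((-(Real.pi / 2) : ℝ) * I) = -I := by
    simpa [neg_div] using Complex.exp_neg_pi_div_two_mul_I
  rw [← sub_le_iff_le_add]
  refine le_limsup_of_le (hf.isBoundedUnder_log_norm_div (by simp)) fun a ha => ?_
  rw [sub_le_comm]
  refine le_limsup_of_le (hf.isBoundedUnder_log_norm_div (by simp)) fun b hb => ?_
  rw [hI] at ha
  rw [hnegI] at hb
  linarith [h a b (eventually_le_exp_mul_of_log_div_le ha) (eventually_le_exp_mul_of_log_div_le hb)]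

end ExpTypeRightHalfPlane

namespace ExpType

variable {f : ℂ → ℂ}

lemma expTypeRightHalfPlane (hf : ExpType f) : ExpTypeRightHalfPlane f :=
  ⟨hf.1.diffContOnCl, hf.2.imp fun _ => Exists.imp fun _ h z _ => h z⟩

lemma analyticOnNhd_univ (hf : ExpType f) : AnalyticOnNhd ℂ f Set.univ :=
  fun z _ => hf.1.analyticAt z

lemma not_eqOn_zero_re_pos (hf : ExpType f) (hf0 : f ≠ 0) : ¬ Set.EqOn f 0 {z | 0 < z.re} := by
  intro h
  have hnhds : {z : ℂ | 0 < z.re} ∈ nhds 1 :=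
    (isOpen_lt continuous_const Complex.continuous_re).mem_nhds (by simp)
  exact hf0 (hf.analyticOnNhd_univ.eq_of_eventuallyEq analyticOnNhd_const
    (h.eventuallyEq_of_mem hnhds))

lemma finite_setOf_mem_and_norm_le (hf : ExpType f) (hf0 : f ≠ 0) {Λ : Set ℂ}
    (hzero : ∀ l ∈ Λ, f l = 0) (r : ℝ) : {z | z ∈ Λ ∧ ‖z‖ ≤ r}.Finite :=
  (finite_setOf_mem_and_eq_zero hf.analyticOnNhd_univ isPreconnected_univ (by simpa using hf0)
    (isCompact_closedBall 0 r) (Set.subset_univ _)).subset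
    fun z hz => ⟨mem_closedBall_zero_iff.2 hz.2, hzero z hz.1⟩

end ExpType

theorem stmt6_general (f : ℂ → ℂ) (hf : ExpTypeRightHalfPlane f)
    (hf0 : ¬ Set.EqOn f 0 {z | 0 < z.re}) (γ : ℝ) (hγ0 : 0 < γ) (hγ : γ < Real.pi / 2)
    (Λ : Set ℂ) (hΛ : Λ ⊆ {z : ℂ | z ≠ 0 ∧ |Complex.arg z| < γ})
    (hfin : ∀ r : ℝ, {z | z ∈ Λ ∧ ‖z‖ ≤ r}.Finite) (hzero : ∀ l ∈ Λ, f l = 0) :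
    ldensC Λ ≤ (indicatorFn f (Real.pi / 2) + indicatorFn f (-(Real.pi / 2))) / 2 /
      (Real.pi * Real.cos γ) := by
  have hcos : 0 < Real.cos γ := Real.cos_pos_of_mem_Ioo ⟨by linarith, hγ⟩
  have hsector : ∀ l ∈ Λ, 0 < l.re ∧ Real.cos γ * ‖l‖ ≤ l.re := fun l hl => by
    have hre : Real.cos γ * ‖l‖ ≤ l.re := mul_comm ‖l‖ _ ▸
      norm_mul_cos_le_re (by linarith) (hΛ hl).2.le
    exact ⟨(mul_pos hcos (norm_pos_iff.2 (hΛ hl).1)).trans_le hre, hre⟩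
  have hbdd : ∀ᶠ r : ℝ in atTop, 0 ≤ (Nat.card {z : ℂ // z ∈ Λ ∧ ‖z‖ ≤ r} : ℝ) / r := by
    filter_upwards [eventually_ge_atTop 0] with r hr
    positivity
  refine liminf_le_of_le ⟨0, hbdd⟩ fun δ hδ => ?_
  have hsum : Real.cos γ * δ * (2 * Real.pi) ≤
      indicatorFn f (Real.pi / 2) + indicatorFn f (-(Real.pi / 2)) :=
    hf.le_indicatorFn_add_of_forall fun a b ha hb => by
      have h := hf.mul_le_of_eventually_le_card_div hf0 hcos.le hsector hfin hzero hδ ha hb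
      rwa [div_div, le_div_iff₀ (by positivity)] at h
  rw [le_div_iff₀ (by positivity)]
  linarith

/-- **Lemma (zeros in a sector).** If `f ≢ 0` is entire of exponential type,
`c = |h_f(π/2) + h_f(−π/2)|/2`, and `Λ` is a set of zeros of `f` contained in the sector
`{z ≠ 0 : |arg z| < γ}` with `0 < γ < π/2`, then `ldens Λ ≤ c / (π cos γ)`. -/
theorem stmt6 (f : ℂ → ℂ) (hf : ExpType f) (hf0 : f ≠ 0)
    (γ : ℝ) (hγ0 : 0 < γ) (hγ : γ < Real.pi / 2)
    (Λ : Set ℂ) (hΛ : Λ ⊆ {z : ℂ | z ≠ 0 ∧ |Complex.arg z| < γ})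
    (hzero : ∀ l ∈ Λ, f l = 0) :
    ldensC Λ ≤ (|indicatorFn f (Real.pi / 2) + indicatorFn f (-(Real.pi / 2))| / 2) /
      (Real.pi * Real.cos γ) := by
  have hcos : 0 < Real.cos γ := Real.cos_pos_of_mem_Ioo ⟨by linarith, hγ⟩
  exact (stmt6_general f hf.expTypeRightHalfPlane (hf.not_eqOn_zero_re_pos hf0) γ hγ0 hγ Λ hΛ
    (hf.finite_setOf_mem_and_norm_le hf0 hzero) hzero).trans (by gcongr; exact le_abs_self _)
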